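/- Let d ≥ 1 and let a, b ∈ ℝ^d with aᵢ < bᵢ for all i, and let [a,b] denote the closed box ∏ᵢ [aᵢ,bᵢ] ⊂ ℝ^d. Let w, u : ℝ^d → ℝ^d be continuously differentiable on a neighbourhood of [a,b] and suppose ∇·w(x) = 0 for all x ∈ [a,b]. Then ∫_{[a,b]} ((w·∇)u)·u dx = (1/2) Σ_{i=1}^d ( ∫_{face xᵢ = bᵢ} wᵢ |u|² dS − ∫_{face xᵢ = aᵢ} wᵢ |u|² dS ), i.e. testing the advection term with the transported field itself produces only a boundary flux of (w·n)|u|²/2. -/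

import Mathlib

/-!
The proof applies the divergence theorem on a box to the field `x ↦ |u x|² w x`. The product rule
gives `∇·(|u|² w) = 2 ((w·∇)u)·u + |u|² ∇·w`, whose last term vanishes on the box, and the boundary
terms of the divergence theorem are the fluxes of `wᵢ |u|²` through the faces. Everything is `C¹` on
a neighbourhood of the box, so the divergence is continuous there, hence integrable.
-/


open MeasureTheory

/-- If `w, u : ℝ^d → ℝ^d` are continuously differentiable on a neighbourhood of the
closed box `[a,b] = ∏ᵢ [aᵢ,bᵢ]` (with `aᵢ < bᵢ`) and `∇·w = 0` on `[a,b]`, then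
`∫_{[a,b]} ((w·∇)u)·u dx
  = (1/2) Σᵢ (∫_{xᵢ=bᵢ} wᵢ |u|² dS − ∫_{xᵢ=aᵢ} wᵢ |u|² dS)`,
where `((w·∇)u)ᵢ = Σⱼ wⱼ ∂ⱼuᵢ`, `|u|² = Σᵢ uᵢ²`, and the face `{xᵢ = cᵢ}` is
identified with the box `∏_{j≠i} [aⱼ,bⱼ]` via `Fin.insertNth`. -/
theorem stmt_1 (n : ℕ) (a b : Fin (n + 1) → ℝ) (hab : ∀ i, a i < b i)
    (w u : (Fin (n + 1) → ℝ) → Fin (n + 1) → ℝ)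
    (U : Set (Fin (n + 1) → ℝ)) (hU : IsOpen U) (hsub : Set.Icc a b ⊆ U)
    (hw : ContDiffOn ℝ 1 w U) (hu : ContDiffOn ℝ 1 u U)
    (hdiv : ∀ x ∈ Set.Icc a b, ∑ i, fderiv ℝ w x (Pi.single i 1) i = 0) :
    ∫ x in Set.Icc a b,
        ∑ i, (∑ j, w x j * fderiv ℝ u x (Pi.single j 1) i) * u x i =
      (1 / 2 : ℝ) *
        ∑ i : Fin (n + 1),
          ((∫ y in Set.Icc (a ∘ i.succAbove) (b ∘ i.succAbove),
              w (i.insertNth (b i) y) i * ∑ k, (u (i.insertNth (b i) y) k) ^ 2)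
            - ∫ y in Set.Icc (a ∘ i.succAbove) (b ∘ i.succAbove),
                w (i.insertNth (a i) y) i * ∑ k, (u (i.insertNth (a i) y) k) ^ 2) := by
  set q : (Fin (n + 1) → ℝ) → ℝ := fun x => ∑ k, (u x k) ^ 2 with hq
  -- The derivative of `wᵢ |u|²` at `x`.
  let F : Fin (n + 1) → (Fin (n + 1) → ℝ) → ((Fin (n + 1) → ℝ) →L[ℝ] ℝ) := fun i x =>
    w x i • (∑ k, (2 * u x k) • (ContinuousLinearMap.proj k).comp (fderiv ℝ u x)) +
      q x • (ContinuousLinearMap.proj i).comp (fderiv ℝ w x)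
  have hwc : ContinuousOn w (Set.Icc a b) := hw.continuousOn.mono hsub
  have huc : ContinuousOn u (Set.Icc a b) := hu.continuousOn.mono hsub
  have hwd : ContinuousOn (fderiv ℝ w) (Set.Icc a b) :=
    (hw.continuousOn_fderiv_of_isOpen hU le_rfl).mono hsub
  have hud : ContinuousOn (fderiv ℝ u) (Set.Icc a b) :=
    (hu.continuousOn_fderiv_of_isOpen hU le_rfl).mono hsub
  have hwi : ∀ i, ContinuousOn (fun x => w x i) (Set.Icc a b) := continuousOn_pi.1 hwc
  have hui : ∀ i, ContinuousOn (fun x => u x i) (Set.Icc a b) := continuousOn_pi.1 huc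
  have hqc : ContinuousOn q (Set.Icc a b) :=
    continuousOn_finsetSum _ fun k _ => (hui k).pow 2
  have hudi : ∀ i j, ContinuousOn (fun x => fderiv ℝ u x (Pi.single j 1) i) (Set.Icc a b) :=
    fun i j => continuousOn_pi.1 (hud.clm_apply continuousOn_const) i
  have hF : ∀ x ∈ Set.Icc a b, ∀ i, HasFDerivAt (fun y => w y i * q y) (F i x) x := by
    intro x hx i
    have hxU := hU.mem_nhds (hsub hx)
    have h1 := ((hw.contDiffAt hxU).differentiableAt one_ne_zero).hasFDerivAt
    have h2 := ((hu.contDiffAt hxU).differentiableAt one_ne_zero).hasFDerivAt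
    have hk : ∀ k, HasFDerivAt (fun y => (u y k) ^ 2)
        ((2 * u x k) • (ContinuousLinearMap.proj k).comp (fderiv ℝ u x)) x := by
      intro k
      simpa using (hasFDerivAt_pi'.1 h2 k).pow 2
    exact (hasFDerivAt_pi'.1 h1 i).mul (HasFDerivAt.fun_sum fun k _ => hk k)
  have hsum : ∀ x ∈ Set.Icc a b, ∑ i, F i x (Pi.single i 1) =
      2 * ∑ i, (∑ j, w x j * fderiv ℝ u x (Pi.single j 1) i) * u x i := by
    intro x hx
    have h0 := hdiv x hx
    simp only [F, ContinuousLinearMap.add_apply, ContinuousLinearMap.smul_apply,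
      ContinuousLinearMap.sum_apply, ContinuousLinearMap.comp_apply,
      ContinuousLinearMap.proj_apply, smul_eq_mul, Finset.sum_add_distrib, ← Finset.mul_sum, h0,
      mul_zero, add_zero]
    simp only [Finset.mul_sum, Finset.sum_mul]
    rw [Finset.sum_comm]
    exact Finset.sum_congr rfl fun i _ => Finset.sum_congr rfl fun j _ => by ring
  have hint : IntegrableOn (fun x => ∑ i, F i x (Pi.single i 1)) (Set.Icc a b) := by
    refine ContinuousOn.integrableOn_compact isCompact_Icc (ContinuousOn.congr ?_ hsum)
    exact continuousOn_const.mul (continuousOn_finsetSum _ fun i _ =>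
      (continuousOn_finsetSum _ fun j _ => (hwi j).mul (hudi i j)).mul (hui i))
  have key := integral_divergence_of_hasFDerivAt_off_countable' a b (fun i => (hab i).le)
    (fun i x => w x i * q x) F ∅ Set.countable_empty (fun i => (hwi i).mul hqc)
    (fun x hx i => hF x ⟨fun j => (hx.1 j trivial).1.le, fun j => (hx.1 j trivial).2.le⟩ i) hint
  rw [setIntegral_congr_fun measurableSet_Icc hsum, integral_const_mul] at key
  rw [← key]
  ring
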